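/- Let $\tilde m \in \mathbb{N}$, $\alpha \in \mathbb{N}_0^n$ with $|\alpha| \le \tilde m$, and $0 < s < \tau < 1$. Set $\theta := \frac{|\alpha|+s}{\tilde m+\tau}$. Then there are constants $C_1, C_2 > 0$ such that for all $f \in C^{\tilde m,\tau}(\mathbb{R}^n)$ and all $R \ge 1$: $\|\partial_x^{\alpha} f\|_{C^{0,s}(\mathbb{R}^n \setminus B_R(0))} \leq C_1 \|f\|_{C^0_b(\mathbb{R}^n\setminus B_R(0))}^{1-|\alpha|/\tilde m} \|f\|_{C^{\tilde m}_b(\mathbb{R}^n\setminus B_R(0))}^{|\alpha|/\tilde m} + C_2 \|f\|_{C^0_b(\mathbb{R}^n\setminus B_R(0))}^{1-\theta} \|f\|_{C^{\tilde m,\tau}(\mathbb{R}^n\setminus B_R(0))}^{\theta}$, with constants independent of $R$. -/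

import Mathlib

noncomputable section
open MeasureTheory

abbrev V (n : ℕ) := EuclideanSpace ℝ (Fin n)

noncomputable def pd (n k : ℕ) {E : Type*} [NormedAddCommGroup E] [NormedSpace ℝ E]
    (d : Fin k → Fin n) (f : V n → E) (x : V n) : E :=
  iteratedFDeriv ℝ k f x (fun i => EuclideanSpace.single (d i) 1)

noncomputable def cbNorm (n k : ℕ) {E : Type*} [NormedAddCommGroup E] [NormedSpace ℝ E]
    (f : V n → E) : ℝ :=
  ⨆ i : Fin (k+1), ⨆ x : V n, ‖iteratedFDeriv ℝ i f x‖

noncomputable def hSemi (n i : ℕ) (τ : ℝ) {E : Type*} [NormedAddCommGroup E] [NormedSpace ℝ E]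
    (f : V n → E) : ℝ :=
  ⨆ p : V n × V n, ‖iteratedFDeriv ℝ i f p.1 - iteratedFDeriv ℝ i f p.2‖ / ‖p.1 - p.2‖ ^ τ

noncomputable def hNorm (n m : ℕ) (τ : ℝ) {E : Type*} [NormedAddCommGroup E] [NormedSpace ℝ E]
    (f : V n → E) : ℝ :=
  cbNorm n m f + ⨆ i : Fin (m+1), hSemi n i τ f

def MemHold (n m : ℕ) (τ : ℝ) {E : Type*} [NormedAddCommGroup E] [NormedSpace ℝ E]
    (f : V n → E) : Prop :=
  ContDiff ℝ m f ∧ ∃ C : ℝ, ∀ i ≤ m, (∀ x, ‖iteratedFDeriv ℝ i f x‖ ≤ C) ∧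
    ∀ x y : V n, ‖iteratedFDeriv ℝ i f x - iteratedFDeriv ℝ i f y‖ ≤ C * ‖x - y‖ ^ τ

noncomputable def extCb (n k : ℕ) (R : ℝ) (f : V n → ℂ) : ℝ :=
  ⨆ i : Fin (k+1), ⨆ x : {x : V n // R ≤ ‖x‖}, ‖iteratedFDeriv ℝ i f x‖

/-- `C^{0,s}` norm of `g` on the exterior domain `{|x| ≥ R}`. -/
noncomputable def extC0s (n : ℕ) (s R : ℝ) (g : V n → ℂ) : ℝ :=
  (⨆ x : {x : V n // R ≤ ‖x‖}, ‖g x‖) +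
  ⨆ p : {x : V n // R ≤ ‖x‖} × {x : V n // R ≤ ‖x‖},
    ‖g p.1 - g p.2‖ / ‖(p.1 : V n) - (p.2 : V n)‖ ^ s

/-- `C^{m,τ}` norm of `f` on the exterior domain `{|x| ≥ R}`. -/
noncomputable def extHol (n m : ℕ) (τ R : ℝ) (f : V n → ℂ) : ℝ :=
  extCb n m R f + ⨆ i : Fin (m+1),
    ⨆ p : {x : V n // R ≤ ‖x‖} × {x : V n // R ≤ ‖x‖},
      ‖iteratedFDeriv ℝ i f p.1 - iteratedFDeriv ℝ i f p.2‖ /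
        ‖(p.1 : V n) - (p.2 : V n)‖ ^ τ

section Interpolation

variable {E F : Type*} [NormedAddCommGroup E] [InnerProductSpace ℝ E]
  [NormedAddCommGroup F] [NormedSpace ℝ F]

lemma norm_le_of_iteratedFDeriv_apply_near {j : ℕ} {f : E → F} (hf : ContDiff ℝ j f)
    {K : Set E} {x : E} {A ε h : ℝ} {L : F} {v : Fin j → E} (hv : ∀ i, ‖v i‖ ≤ h)
    (hK : ∀ y ∈ K, ∀ i, ∀ t ∈ Set.Icc (0 : ℝ) 1, y + t • v i ∈ K) (hx : x ∈ K)
    (hA : ∀ y ∈ K, ‖f y‖ ≤ A)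
    (hL : ∀ y ∈ K, ‖y - x‖ ≤ j * h → ‖iteratedFDeriv ℝ j f y v - L‖ ≤ ε) :
    ‖L‖ ≤ 2 ^ j * A + ε := by
  induction j generalizing f A with
  | zero =>
    have h1 := hL x hx (by simp)
    have h2 := hA x hx
    rw [iteratedFDeriv_zero_apply] at h1
    have h3 := norm_sub_norm_le L (f x)
    rw [norm_sub_rev] at h3
    simp only [pow_zero, one_mul]
    linarith
  | succ j ih =>
    have hfj : ContDiff ℝ j f := hf.of_le (by exact_mod_cast j.le_succ)
    have hfj' : ContDiff ℝ j (fun y => f (y + v 0)) := hfj.comp (contDiff_id.add contDiff_const)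
    have key := ih (f := fun y => f (y + v 0) - f y) (A := 2 * A) (v := Fin.tail v)
      (hfj'.sub hfj) (fun i => hv i.succ) (fun y hy i => hK y hy i.succ) ?_ ?_
    · calc ‖L‖ ≤ 2 ^ j * (2 * A) + ε := key
        _ = 2 ^ (j + 1) * A + ε := by ring
    · intro y hy
      have h1 := hA _ (hK y hy 0 1 (by simp))
      have h2 := hA y hy
      rw [one_smul] at h1
      exact (norm_sub_le _ _).trans (by linarith)
    · intro y hy hyx
      have hdiff : Differentiable ℝ (iteratedFDeriv ℝ j f) :=
        hf.differentiable_iteratedFDeriv (by exact_mod_cast j.lt_succ_self)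
      rw [fun_iteratedFDeriv_sub_apply hfj'.contDiffAt hfj.contDiffAt,
        iteratedFDeriv_comp_add_right]
      have hder : ∀ t : ℝ, HasDerivAt
          (fun t : ℝ => iteratedFDeriv ℝ j f (y + t • v 0) (Fin.tail v) - t • L)
          (iteratedFDeriv ℝ (j + 1) f (y + t • v 0) v - L) t := by
        intro t
        have h1 : HasDerivAt (fun t : ℝ => y + t • v 0) (v 0) t := by
          simpa using ((hasDerivAt_id t).smul_const (v 0)).const_add y
        have h2 := (hdiff (y + t • v 0)).hasFDerivAt.comp_hasDerivAt t h1
        have h3 := ((ContinuousMultilinearMap.apply ℝ (fun _ : Fin j => E) F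
          (Fin.tail v)).hasFDerivAt.comp_hasDerivAt t h2)
        have h4 : HasDerivAt (fun t : ℝ => t • L) L t := by
          simpa using (hasDerivAt_id t).smul_const L
        exact h3.sub h4
      have := norm_image_sub_le_of_norm_deriv_le_segment_01' (C := ε)
        (fun t _ => (hder t).hasDerivWithinAt) (fun t ht => ?_)
      · simpa [sub_right_comm] using this
      · refine hL _ (hK y hy 0 t ⟨ht.1, ht.2.le⟩) ?_
        have h1 : ‖t • v 0‖ ≤ h := by
          rw [norm_smul, Real.norm_of_nonneg ht.1]
          exact (mul_le_of_le_one_left (norm_nonneg _) ht.2.le).trans (hv 0)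
        calc ‖y + t • v 0 - x‖ = ‖(y - x) + t • v 0‖ := by congr 1; abel
          _ ≤ ‖y - x‖ + ‖t • v 0‖ := norm_add_le _ _
          _ ≤ ((j + 1 : ℕ) : ℝ) * h := by push_cast; linarith

/-- The closed half-space with boundary point `x` and inner normal `x`. -/
def outerHalfSpace (x : E) : Set E := {y | inner ℝ x x ≤ inner ℝ x y}

lemma self_mem_outerHalfSpace (x : E) : x ∈ outerHalfSpace x :=
  le_refl (inner ℝ x x)

lemma convex_outerHalfSpace (x : E) : Convex ℝ (outerHalfSpace x) :=
  convex_halfSpace_ge (innerₛₗ ℝ x).isLinear _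

lemma norm_le_of_mem_outerHalfSpace {x y : E} (hy : y ∈ outerHalfSpace x) : ‖x‖ ≤ ‖y‖ := by
  have h1 : inner ℝ x x ≤ inner ℝ x y := hy
  have h2 := real_inner_le_norm x y
  rw [real_inner_self_eq_norm_mul_norm] at h1
  rcases (norm_nonneg x).eq_or_lt with h | h
  · rw [← h]; exact norm_nonneg y
  · exact le_of_mul_le_mul_left (h1.trans h2) h

lemma norm_iteratedFDeriv_le_of_outerHalfSpace {j : ℕ} {f : E → F} (hf : ContDiff ℝ j f)
    {x : E} {A ω h : ℝ} (hh : 0 < h) (hA : ∀ y ∈ outerHalfSpace x, ‖f y‖ ≤ A)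
    (hω : ∀ y ∈ outerHalfSpace x, ‖y - x‖ ≤ j * h →
      ‖iteratedFDeriv ℝ j f y - iteratedFDeriv ℝ j f x‖ ≤ ω) :
    ‖iteratedFDeriv ℝ j f x‖ ≤ 2 ^ j * A / h ^ j + ω := by
  have hA0 : 0 ≤ A := (norm_nonneg _).trans (hA x (self_mem_outerHalfSpace x))
  have hω0 : 0 ≤ ω := (norm_nonneg _).trans
    (hω x (self_mem_outerHalfSpace x) (by rw [sub_self, norm_zero]; positivity))
  refine ContinuousMultilinearMap.opNorm_le_bound (by positivity) fun w => ?_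
  by_cases hw : ∃ i, w i = 0
  · obtain ⟨i, hi⟩ := hw
    rw [ContinuousMultilinearMap.map_coord_zero _ i hi, norm_zero]
    positivity
  push Not at hw
  have hw' : ∀ i, 0 < ‖w i‖ := fun i => norm_pos_iff.2 (hw i)
  have hprod : 0 < ∏ i, ‖w i‖ := Finset.prod_pos fun i _ => hw' i
  let σ : Fin j → ℝ := fun i => if 0 ≤ inner ℝ x (w i) then 1 else -1
  have hσ : ∀ i, |σ i| = 1 := fun i => by simp only [σ]; split_ifs <;> simp
  let c : Fin j → ℝ := fun i => σ i * (h / ‖w i‖)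
  have hc : ∀ i, |c i| = h / ‖w i‖ := fun i => by
    simp only [c, abs_mul, hσ, one_mul]
    exact abs_of_pos (div_pos hh (hw' i))
  have hcw : ∀ i, ‖c i • w i‖ = h := fun i => by
    rw [norm_smul, Real.norm_eq_abs, hc, div_mul_cancel₀ _ (hw' i).ne']
  have hin : ∀ i, 0 ≤ inner ℝ x (c i • w i) := fun i => by
    have : 0 ≤ σ i * inner ℝ x (w i) := by
      simp only [σ]; split_ifs with hs
      · simpa using hs
      · push Not at hs; linarith
    rw [real_inner_smul_right]
    have h2 := mul_nonneg this (div_pos hh (hw' i)).le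
    simp only [c]
    linarith
  have key := norm_le_of_iteratedFDeriv_apply_near hf (K := outerHalfSpace x) (x := x) (A := A)
    (ε := ω * h ^ j) (L := iteratedFDeriv ℝ j f x (fun i => c i • w i))
    (fun i => (hcw i).le) ?_ (self_mem_outerHalfSpace x) hA ?_
  · rw [ContinuousMultilinearMap.map_smul_univ, norm_smul, norm_prod] at key
    have h1 : ∏ i, ‖c i‖ = h ^ j / ∏ i, ‖w i‖ := by
      simp [hc, Finset.prod_div_distrib]
    rw [h1, div_mul_eq_mul_div, div_le_iff₀ hprod] at key
    have hhj : 0 < h ^ j := pow_pos hh j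
    refine le_of_mul_le_mul_left (key.trans (le_of_eq ?_)) hhj
    field_simp
  · intro y hy i t ht
    have h1 : inner ℝ x x ≤ inner ℝ x y := hy
    change inner ℝ x x ≤ inner ℝ x (y + t • c i • w i)
    rw [inner_add_right, real_inner_smul_right]
    have := mul_nonneg ht.1 (hin i)
    linarith
  · intro y hy hyx
    rw [← sub_apply]
    refine (ContinuousMultilinearMap.le_opNorm _ _).trans ?_
    simp only [hcw, Finset.prod_const, Finset.card_univ, Fintype.card_fin]
    exact mul_le_mul_of_nonneg_right (hω y hy hyx) (by positivity)

lemma norm_iteratedFDeriv_sub_le_of_outerHalfSpace {j : ℕ} {f : E → F}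
    (hf : ContDiff ℝ (j + 1 : ℕ) f) {x y : E} {S : ℝ} (hy : y ∈ outerHalfSpace x)
    (hS : ∀ z ∈ outerHalfSpace x, ‖iteratedFDeriv ℝ (j + 1) f z‖ ≤ S) :
    ‖iteratedFDeriv ℝ j f y - iteratedFDeriv ℝ j f x‖ ≤ S * ‖y - x‖ := by
  have hdiff : Differentiable ℝ (iteratedFDeriv ℝ j f) :=
    hf.differentiable_iteratedFDeriv (by exact_mod_cast j.lt_succ_self)
  exact Convex.norm_image_sub_le_of_norm_fderiv_le (fun z _ => hdiff z)
    (fun z hz => by rw [norm_fderiv_iteratedFDeriv]; exact hS z hz) (convex_outerHalfSpace x)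
    (self_mem_outerHalfSpace x) hy

variable (E F) in
lemma exists_norm_iteratedFDeriv_exterior_le (m : ℕ) {τ : ℝ} (hτ : 0 < τ) {j : ℕ} (hj : j ≤ m) :
    ∃ C : ℝ, 0 ≤ C ∧ ∀ (R A H h : ℝ) (f : E → F), 0 ≤ A → 0 ≤ H → 0 < h → ContDiff ℝ m f →
      (∀ x, R ≤ ‖x‖ → ‖f x‖ ≤ A) →
      (∀ x y, R ≤ ‖x‖ → R ≤ ‖y‖ →
        ‖iteratedFDeriv ℝ m f x - iteratedFDeriv ℝ m f y‖ ≤ H * ‖x - y‖ ^ τ) →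
      ∀ x, R ≤ ‖x‖ → ‖iteratedFDeriv ℝ j f x‖ ≤ C * (A + H * h ^ ((m : ℝ) + τ)) / h ^ j := by
  induction hj using Nat.decreasingInduction with
  | self =>
    refine ⟨2 ^ m + (m : ℝ) ^ τ, by positivity, ?_⟩
    intro R A H h f hA0 hH0 hh hf hA hH x hx
    have hext : ∀ y ∈ outerHalfSpace x, R ≤ ‖y‖ :=
      fun y hy => hx.trans (norm_le_of_mem_outerHalfSpace hy)
    have key := norm_iteratedFDeriv_le_of_outerHalfSpace hf (x := x) (ω := H * (m * h) ^ τ) hh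
      (fun y hy => hA y (hext y hy)) (fun y hy hyx => (hH y x (hext y hy) hx).trans
        (mul_le_mul_of_nonneg_left (Real.rpow_le_rpow (norm_nonneg _) hyx hτ.le) hH0))
    refine key.trans ?_
    have hhm : 0 < h ^ m := pow_pos hh m
    rw [Real.mul_rpow (by positivity) hh.le, Real.rpow_add hh, Real.rpow_natCast,
      le_div_iff₀ hhm, add_mul, div_mul_cancel₀ _ hhm.ne']
    have h1 : 0 ≤ (2 : ℝ) ^ m * (H * (h ^ m * h ^ τ)) := by positivity
    have h2 : 0 ≤ (m : ℝ) ^ τ * A := by positivity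
    linarith
  | of_succ j hj ih =>
    obtain ⟨C, hC, ih⟩ := ih
    refine ⟨2 ^ j + C * j, by positivity, ?_⟩
    intro R A H h f hA0 hH0 hh hf hA hH x hx
    have hext : ∀ y ∈ outerHalfSpace x, R ≤ ‖y‖ :=
      fun y hy => hx.trans (norm_le_of_mem_outerHalfSpace hy)
    have ihx := ih R A H h f hA0 hH0 hh hf hA hH
    have hf' : ContDiff ℝ (j + 1 : ℕ) f := hf.of_le (by exact_mod_cast hj)
    set Q := H * h ^ ((m : ℝ) + τ) with hQ
    have hQ0 : 0 ≤ Q := by positivity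
    have key := norm_iteratedFDeriv_le_of_outerHalfSpace
      (hf'.of_le (by exact_mod_cast j.le_succ)) (x := x)
      (ω := C * (A + Q) / h ^ (j + 1) * (j * h)) hh
      (fun y hy => hA y (hext y hy)) (fun y hy hyx =>
        (norm_iteratedFDeriv_sub_le_of_outerHalfSpace hf' hy
          (fun z hz => ihx z (hext z hz))).trans
        (mul_le_mul_of_nonneg_left hyx (by positivity)))
    refine key.trans ?_
    have h1 : C * (A + Q) / h ^ (j + 1) * (j * h) = C * j * (A + Q) / h ^ j := by
      field_simp
      ring
    rw [h1, ← add_div]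
    gcongr
    have : 0 ≤ (2 : ℝ) ^ j * Q := by positivity
    linarith

/-- Two close points of the exterior of the unit ball have half-spaces meeting nearby. -/
lemma exists_mem_outerHalfSpace_inter {x y : E} (hx : 1 ≤ ‖x‖) (hxy : ‖x - y‖ ≤ 1 / 2) :
    ∃ z ∈ outerHalfSpace x ∩ outerHalfSpace y,
      ‖z - x‖ ≤ 4 * ‖x - y‖ ∧ ‖z - y‖ ≤ 3 * ‖x - y‖ := by
  have hx0 : 0 < ‖x‖ := by linarith
  set r := ‖x - y‖ / ‖x‖ with hr
  have hr0 : 0 ≤ r := by positivity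
  have hrx : r * ‖x‖ = ‖x - y‖ := div_mul_cancel₀ _ hx0.ne'
  have hr1 : r ≤ 1 / 2 := by
    rw [hr, div_le_iff₀ hx0]; linarith
  have hy : ‖y‖ ≤ 3 / 2 * ‖x‖ := by
    have := norm_sub_norm_le y x
    rw [norm_sub_rev] at this
    linarith
  have hzy : ‖(1 + 2 * r) • y - y‖ ≤ 3 * ‖x - y‖ := by
    have : (1 + 2 * r) • y - y = (2 * r) • y := by rw [add_smul, one_smul]; abel
    rw [this, norm_smul, Real.norm_of_nonneg (by positivity), ← hrx]
    nlinarith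
  refine ⟨(1 + 2 * r) • y, ⟨?_, ?_⟩, ?_, hzy⟩
  · change inner ℝ x x ≤ inner ℝ x ((1 + 2 * r) • y)
    rw [real_inner_smul_right]
    have h1 : inner ℝ x y = inner ℝ x x - inner ℝ x (x - y) := by rw [inner_sub_right]; ring
    have h2 := real_inner_le_norm x (x - y)
    rw [← hrx] at h2
    rw [h1, real_inner_self_eq_norm_mul_norm]
    have h3 : ‖x‖ * ‖x‖ * (1 - r) ≤ ‖x‖ * ‖x‖ - inner ℝ x (x - y) := by linarith
    have h4 : 1 ≤ (1 + 2 * r) * (1 - r) := by nlinarith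
    calc ‖x‖ * ‖x‖ ≤ ‖x‖ * ‖x‖ * ((1 + 2 * r) * (1 - r)) :=
          le_mul_of_one_le_right (by positivity) h4
      _ = (1 + 2 * r) * (‖x‖ * ‖x‖ * (1 - r)) := by ring
      _ ≤ _ := mul_le_mul_of_nonneg_left h3 (by positivity)
  · change inner ℝ y y ≤ inner ℝ y ((1 + 2 * r) • y)
    rw [real_inner_smul_right]
    exact le_mul_of_one_le_left real_inner_self_nonneg (by linarith)
  · calc ‖(1 + 2 * r) • y - x‖ = ‖((1 + 2 * r) • y - y) - (x - y)‖ := by congr 1; abel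
      _ ≤ _ := norm_sub_le _ _
      _ ≤ 4 * ‖x - y‖ := by linarith

variable (E F) in
lemma exists_holder_exterior_le_of_pos {m j : ℕ} (hj : j ≤ m) {s τ : ℝ} (hs : 0 < s)
    (hsτ : s < τ) (hτ : τ < 1) :
    ∃ C : ℝ, 0 ≤ C ∧ ∀ (R A H : ℝ) (f : E → F), 1 ≤ R → 0 < A → A ≤ H → ContDiff ℝ m f →
      (∀ x, R ≤ ‖x‖ → ‖f x‖ ≤ A) →
      (∀ x y, R ≤ ‖x‖ → R ≤ ‖y‖ →
        ‖iteratedFDeriv ℝ m f x - iteratedFDeriv ℝ m f y‖ ≤ H * ‖x - y‖ ^ τ) →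
      (∀ x, R ≤ ‖x‖ → ‖iteratedFDeriv ℝ j f x‖ ≤
        C * (A ^ (1 - (j + s) / (m + τ)) * H ^ ((j + s) / (m + τ)))) ∧
      ∀ x y, R ≤ ‖x‖ → R ≤ ‖y‖ → ‖iteratedFDeriv ℝ j f x - iteratedFDeriv ℝ j f y‖ ≤
        C * (A ^ (1 - (j + s) / (m + τ)) * H ^ ((j + s) / (m + τ))) * ‖x - y‖ ^ s := by
  have hτ0 : 0 < τ := hs.trans hsτ
  have hmτ : 0 < (m : ℝ) + τ := by positivity
  obtain ⟨C, hC, hbound⟩ := exists_norm_iteratedFDeriv_exterior_le E F m hτ0 hj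
  obtain ⟨D, hD, hnear⟩ : ∃ D : ℝ, 0 ≤ D ∧ ∀ (R A H h : ℝ) (f : E → F), 1 ≤ R → 0 < A →
      0 < H → 0 < h → h ≤ 1 → H * h ^ ((m : ℝ) + τ) = A → ContDiff ℝ m f →
      (∀ x, R ≤ ‖x‖ → ‖f x‖ ≤ A) →
      (∀ x y, R ≤ ‖x‖ → R ≤ ‖y‖ →
        ‖iteratedFDeriv ℝ m f x - iteratedFDeriv ℝ m f y‖ ≤ H * ‖x - y‖ ^ τ) →
      ∀ x y, R ≤ ‖x‖ → R ≤ ‖y‖ → 0 < ‖x - y‖ → ‖x - y‖ ≤ h / 2 →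
        ‖iteratedFDeriv ℝ j f x - iteratedFDeriv ℝ j f y‖ ≤
          D * (A / h ^ ((j : ℝ) + s)) * ‖x - y‖ ^ s := by
    rcases hj.eq_or_lt with rfl | hlt
    · refine ⟨1, zero_le_one, ?_⟩
      intro R A H h f hR hA0 hH0 hh hh1 hhA hf hA hH x y hx hy hxy0 hxy
      have hxyh : ‖x - y‖ ≤ h := by linarith
      refine (hH x y hx hy).trans ?_
      have h1 : ‖x - y‖ ^ τ = ‖x - y‖ ^ (τ - s) * ‖x - y‖ ^ s := by
        rw [← Real.rpow_add hxy0]; congr 1; ring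
      have h2 : A / h ^ ((j : ℝ) + s) = H * h ^ (τ - s) := by
        rw [← hhA, mul_div_assoc, ← Real.rpow_sub hh]; congr 2; ring
      rw [h1, h2, one_mul, ← mul_assoc]
      have := Real.rpow_le_rpow hxy0.le hxyh (sub_nonneg.2 hsτ.le)
      gcongr
    · obtain ⟨B, hB, hsucc⟩ :=
        exists_norm_iteratedFDeriv_exterior_le E F m hτ0 (Nat.succ_le_of_lt hlt)
      refine ⟨14 * B, by positivity, ?_⟩
      intro R A H h f hR hA0 hH0 hh hh1 hhA hf hA hH x y hx hy hxy0 hxy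
      have hxyh : ‖x - y‖ ≤ h := by linarith
      have hS := hsucc R A H h f hA0.le hH0.le hh hf hA hH
      rw [hhA] at hS
      have hf' : ContDiff ℝ (j + 1 : ℕ) f := hf.of_le (by exact_mod_cast hlt)
      obtain ⟨z, ⟨hzx, hzy⟩, h1, h2⟩ :=
        exists_mem_outerHalfSpace_inter (hR.trans hx) (hxy.trans (by linarith))
      have h3 := norm_iteratedFDeriv_sub_le_of_outerHalfSpace hf' hzx
        (fun w hw => hS w (hx.trans (norm_le_of_mem_outerHalfSpace hw)))
      have h4 := norm_iteratedFDeriv_sub_le_of_outerHalfSpace hf' hzy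
        (fun w hw => hS w (hy.trans (norm_le_of_mem_outerHalfSpace hw)))
      set S := B * (A + A) / h ^ (j + 1) with hSdef
      have hS0 : 0 ≤ S := by positivity
      have h5 : ‖iteratedFDeriv ℝ j f x - iteratedFDeriv ℝ j f y‖ ≤ 7 * S * ‖x - y‖ := by
        calc ‖iteratedFDeriv ℝ j f x - iteratedFDeriv ℝ j f y‖
            = ‖(iteratedFDeriv ℝ j f z - iteratedFDeriv ℝ j f y) -
                (iteratedFDeriv ℝ j f z - iteratedFDeriv ℝ j f x)‖ := by congr 1; abel
          _ ≤ S * ‖z - y‖ + S * ‖z - x‖ := (norm_sub_le _ _).trans (add_le_add h4 h3)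
          _ ≤ S * (3 * ‖x - y‖) + S * (4 * ‖x - y‖) := by gcongr
          _ = 7 * S * ‖x - y‖ := by ring
      refine h5.trans ?_
      have h6 : ‖x - y‖ = ‖x - y‖ ^ (1 - s) * ‖x - y‖ ^ s := by
        rw [← Real.rpow_add hxy0, sub_add_cancel, Real.rpow_one]
      have h7 : ‖x - y‖ ^ (1 - s) ≤ h ^ (1 - s) :=
        Real.rpow_le_rpow hxy0.le hxyh (by linarith)
      have h8 : h ^ (1 - s) / h ^ (j + 1) = 1 / h ^ ((j : ℝ) + s) := by
        rw [← Real.rpow_natCast, ← Real.rpow_sub hh, one_div, ← Real.rpow_neg hh.le]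
        congr 1; push_cast; ring
      calc 7 * S * ‖x - y‖ = 7 * S * (‖x - y‖ ^ (1 - s) * ‖x - y‖ ^ s) := by rw [← h6]
        _ ≤ 7 * S * (h ^ (1 - s) * ‖x - y‖ ^ s) := by gcongr
        _ = 14 * B * A * (h ^ (1 - s) / h ^ (j + 1)) * ‖x - y‖ ^ s := by rw [hSdef]; ring
        _ = 14 * B * (A / h ^ ((j : ℝ) + s)) * ‖x - y‖ ^ s := by rw [h8]; ring
  refine ⟨8 * C + D, by positivity, ?_⟩
  intro R A H f hR hA0 hAH hf hA hH
  have hH0 : 0 < H := hA0.trans_le hAH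
  set h := (A / H) ^ (1 / ((m : ℝ) + τ)) with hh_def
  have hAH0 : 0 < A / H := div_pos hA0 hH0
  have hh : 0 < h := Real.rpow_pos_of_pos hAH0 _
  have hh1 : h ≤ 1 := Real.rpow_le_one hAH0.le ((div_le_one hH0).2 hAH) (by positivity)
  have hhA : H * h ^ ((m : ℝ) + τ) = A := by
    rw [hh_def, ← Real.rpow_mul hAH0.le, one_div_mul_cancel hmτ.ne', Real.rpow_one,
      mul_div_cancel₀ _ hH0.ne']
  have hT : A ^ (1 - (j + s) / (m + τ)) * H ^ ((j + s) / (m + τ)) = A / h ^ ((j : ℝ) + s) := by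
    rw [hh_def, ← Real.rpow_mul hAH0.le, Real.div_rpow hA0.le hH0.le, Real.rpow_sub hA0,
      Real.rpow_one, one_div_mul_eq_div]
    field_simp
  rw [hT]
  set T := A / h ^ ((j : ℝ) + s) with hTdef
  have hT0 : 0 ≤ T := by positivity
  have hle : A / h ^ j ≤ T * h ^ s := by
    rw [hTdef, Real.rpow_add hh, Real.rpow_natCast]
    have := Real.rpow_pos_of_pos hh s
    apply le_of_eq
    field_simp
  have hsup : ∀ x, R ≤ ‖x‖ → ‖iteratedFDeriv ℝ j f x‖ ≤ 2 * C * (T * h ^ s) := by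
    intro x hx
    have := hbound R A H h f hA0.le hH0.le hh hf hA hH x hx
    rw [hhA] at this
    calc _ ≤ C * (A + A) / h ^ j := this
      _ = 2 * C * (A / h ^ j) := by ring
      _ ≤ _ := by gcongr
  refine ⟨fun x hx => (hsup x hx).trans ?_, fun x y hx hy => ?_⟩
  · have h1 : T * h ^ s ≤ T := mul_le_of_le_one_right hT0 (Real.rpow_le_one hh.le hh1 hs.le)
    calc 2 * C * (T * h ^ s) ≤ 2 * C * T := by gcongr
      _ ≤ (8 * C + D) * T := by gcongr; linarith
  rcases (norm_nonneg (x - y)).eq_or_lt with h0 | h0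
  · have hxy : x = y := sub_eq_zero.1 (norm_eq_zero.1 h0.symm)
    subst hxy
    rw [sub_self, norm_zero]
    positivity
  have hp : 0 < ‖x - y‖ ^ s := Real.rpow_pos_of_pos h0 s
  rcases le_total ‖x - y‖ (h / 2) with hxy | hxy
  · refine (hnear R A H h f hR hA0 hH0 hh hh1 hhA hf hA hH x y hx hy h0 hxy).trans ?_
    gcongr
    linarith
  · have h1 : h ^ s ≤ 2 * ‖x - y‖ ^ s := by
      calc h ^ s ≤ (2 * ‖x - y‖) ^ s := Real.rpow_le_rpow hh.le (by linarith) hs.le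
        _ = 2 ^ s * ‖x - y‖ ^ s := Real.mul_rpow zero_le_two (norm_nonneg _)
        _ ≤ 2 * ‖x - y‖ ^ s := by
          gcongr
          exact (Real.rpow_le_rpow_of_exponent_le one_le_two (by linarith : s ≤ 1)).trans_eq
            (Real.rpow_one 2)
    calc _ ≤ 2 * C * (T * h ^ s) + 2 * C * (T * h ^ s) :=
          (norm_sub_le _ _).trans (add_le_add (hsup x hx) (hsup y hy))
      _ ≤ 2 * C * (T * (2 * ‖x - y‖ ^ s)) + 2 * C * (T * (2 * ‖x - y‖ ^ s)) := by gcongr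
      _ = 8 * C * T * ‖x - y‖ ^ s := by ring
      _ ≤ (8 * C + D) * T * ‖x - y‖ ^ s := by gcongr; linarith

variable (E F) in
lemma exists_holder_exterior_le {m j : ℕ} (hj : j ≤ m) {s τ : ℝ} (hs : 0 < s)
    (hsτ : s < τ) (hτ : τ < 1) :
    ∃ C : ℝ, 0 ≤ C ∧ ∀ (R A H : ℝ) (f : E → F), 1 ≤ R → 0 ≤ A → A ≤ H → ContDiff ℝ m f →
      (∀ x, R ≤ ‖x‖ → ‖f x‖ ≤ A) →
      (∀ x y, R ≤ ‖x‖ → R ≤ ‖y‖ →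
        ‖iteratedFDeriv ℝ m f x - iteratedFDeriv ℝ m f y‖ ≤ H * ‖x - y‖ ^ τ) →
      (∀ x, R ≤ ‖x‖ → ‖iteratedFDeriv ℝ j f x‖ ≤
        C * (A ^ (1 - (j + s) / (m + τ)) * H ^ ((j + s) / (m + τ)))) ∧
      ∀ x y, R ≤ ‖x‖ → R ≤ ‖y‖ → ‖iteratedFDeriv ℝ j f x - iteratedFDeriv ℝ j f y‖ ≤
        C * (A ^ (1 - (j + s) / (m + τ)) * H ^ ((j + s) / (m + τ))) * ‖x - y‖ ^ s := by
  obtain ⟨C, hC, hpos⟩ := exists_holder_exterior_le_of_pos E F hj hs hsτ hτ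
  refine ⟨C, hC, fun R A H f hR hA0 hAH hf hA hH => ?_⟩
  have hmτ : 0 < (m : ℝ) + τ := by have := hs.trans hsτ; positivity
  have hθ0 : 0 ≤ ((j : ℝ) + s) / (m + τ) := by positivity
  have hθ1 : 0 ≤ 1 - ((j : ℝ) + s) / (m + τ) := by
    have : (j : ℝ) ≤ m := by exact_mod_cast hj
    rw [sub_nonneg, div_le_one hmτ]
    linarith
  have hpert := fun (δ : ℝ) (hδ : 0 < δ) =>
    hpos R (A + δ) (H + δ) f hR (by positivity) (by linarith) hf
      (fun x hx => (hA x hx).trans (by linarith))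
      (fun x y hx hy => (hH x y hx hy).trans (by gcongr; linarith))
  have hlim : Filter.Tendsto (fun δ : ℝ => C * ((A + δ) ^ (1 - ((j : ℝ) + s) / (m + τ)) *
      (H + δ) ^ (((j : ℝ) + s) / (m + τ)))) (nhdsWithin 0 (Set.Ioi 0))
      (nhds (C * (A ^ (1 - ((j : ℝ) + s) / (m + τ)) * H ^ (((j : ℝ) + s) / (m + τ))))) := by
    have hcont : Continuous (fun δ : ℝ => C * ((A + δ) ^ (1 - ((j : ℝ) + s) / (m + τ)) *
        (H + δ) ^ (((j : ℝ) + s) / (m + τ)))) :=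
      continuous_const.mul (((continuous_const.add continuous_id).rpow_const
        fun _ => Or.inr hθ1).mul ((continuous_const.add continuous_id).rpow_const
        fun _ => Or.inr hθ0))
    simpa using (hcont.tendsto 0).mono_left nhdsWithin_le_nhds
  exact ⟨fun x hx => ge_of_tendsto hlim
      (Filter.eventually_of_mem self_mem_nhdsWithin fun δ hδ => (hpert δ hδ).1 x hx),
    fun x y hx hy => ge_of_tendsto (hlim.mul_const _)
      (Filter.eventually_of_mem self_mem_nhdsWithin fun δ hδ => (hpert δ hδ).2 x y hx hy)⟩

end Interpolation

lemma norm_iteratedFDeriv_le_extCb {n m i : ℕ} {τ R : ℝ} {f : V n → ℂ} (hf : MemHold n m τ f)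
    {k : ℕ} (hk : k ≤ m) (hi : i ≤ k) {x : V n} (hx : R ≤ ‖x‖) :
    ‖iteratedFDeriv ℝ i f x‖ ≤ extCb n k R f := by
  obtain ⟨-, C, hC⟩ := hf
  have h1 : BddAbove (Set.range fun y : {y : V n // R ≤ ‖y‖} => ‖iteratedFDeriv ℝ i f y‖) :=
    ⟨C, by rintro _ ⟨y, rfl⟩; exact (hC i (hi.trans hk)).1 y⟩
  refine (le_ciSup h1 ⟨x, hx⟩).trans ?_
  exact le_ciSup (f := fun i : Fin (k + 1) => ⨆ y : {y : V n // R ≤ ‖y‖},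
    ‖iteratedFDeriv ℝ i f y‖) (Set.finite_range _).bddAbove ⟨i, Nat.lt_succ_of_le hi⟩

lemma extCb_nonneg (n k : ℕ) (R : ℝ) (f : V n → ℂ) : 0 ≤ extCb n k R f :=
  Real.iSup_nonneg fun _ => Real.iSup_nonneg fun _ => norm_nonneg _

lemma extCb_le_extHol (n m : ℕ) (τ R : ℝ) (f : V n → ℂ) : extCb n m R f ≤ extHol n m τ R f :=
  le_add_of_nonneg_right (Real.iSup_nonneg fun _ => Real.iSup_nonneg fun _ => by positivity)

lemma norm_iteratedFDeriv_sub_le_extHol {n m : ℕ} {τ R : ℝ} {f : V n → ℂ} (hτ : 0 < τ)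
    (hf : MemHold n m τ f) {x y : V n} (hx : R ≤ ‖x‖) (hy : R ≤ ‖y‖) :
    ‖iteratedFDeriv ℝ m f x - iteratedFDeriv ℝ m f y‖ ≤ extHol n m τ R f * ‖x - y‖ ^ τ := by
  rcases (norm_nonneg (x - y)).eq_or_lt with h0 | h0
  · have hxy : x = y := sub_eq_zero.1 (norm_eq_zero.1 h0.symm)
    subst hxy
    simp [Real.zero_rpow hτ.ne']
  rw [← div_le_iff₀ (Real.rpow_pos_of_pos h0 τ)]
  obtain ⟨-, C, hC⟩ := hf
  let q : Fin (m + 1) → {x : V n // R ≤ ‖x‖} × {x : V n // R ≤ ‖x‖} → ℝ := fun i p =>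
    ‖iteratedFDeriv ℝ i f p.1 - iteratedFDeriv ℝ i f p.2‖ / ‖(p.1 : V n) - (p.2 : V n)‖ ^ τ
  have hC0 : 0 ≤ C := (norm_nonneg _).trans ((hC m le_rfl).1 x)
  have h1 : BddAbove (Set.range (q (Fin.last m))) := by
    refine ⟨C, ?_⟩
    rintro _ ⟨p, rfl⟩
    exact div_le_of_le_mul₀ (by positivity) hC0 ((hC m le_rfl).2 p.1 p.2)
  refine (le_ciSup h1 (⟨x, hx⟩, ⟨y, hy⟩)).trans ?_
  refine (le_ciSup (f := fun i => ⨆ p, q i p) (Set.finite_range _).bddAbove (Fin.last m)).trans ?_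
  exact le_add_of_nonneg_left (extCb_nonneg n m R f)

lemma norm_apply_single_le {n j : ℕ} (d : Fin j → Fin n) (M : (V n) [×j]→L[ℝ] ℂ) :
    ‖M (fun i => EuclideanSpace.single (d i) 1)‖ ≤ ‖M‖ := by
  simpa using M.le_opNorm (fun i => EuclideanSpace.single (d i) (1 : ℝ))

/-- exterior-domain interpolation estimate for the `C^{0,s}` norm of `∂^α f`,
with constants independent of `R ≥ 1`. -/
theorem stmt18 (n m : ℕ) (hm : 1 ≤ m) (j : ℕ) (hj : j ≤ m) (d : Fin j → Fin n)
    (s τ : ℝ) (hs : 0 < s) (hsτ : s < τ) (hτ : τ < 1) :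
    ∃ C₁ > 0, ∃ C₂ > 0, ∀ R : ℝ, 1 ≤ R → ∀ f : V n → ℂ, MemHold n m τ f →
      extC0s n s R (pd n j d f) ≤
        C₁ * extCb n 0 R f ^ (1 - (j:ℝ)/(m:ℝ)) * extCb n m R f ^ ((j:ℝ)/(m:ℝ)) +
        C₂ * extCb n 0 R f ^ (1 - ((j:ℝ)+s)/((m:ℝ)+τ)) *
          extHol n m τ R f ^ (((j:ℝ)+s)/((m:ℝ)+τ)) := by
  have hτ0 : 0 < τ := hs.trans hsτ
  obtain ⟨C, hC, hbound⟩ := exists_holder_exterior_le (V n) ℂ hj hs hsτ hτ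
  refine ⟨1, one_pos, 2 * C + 1, by positivity, fun R hR f hf => ?_⟩
  have hA0 := extCb_nonneg n 0 R f
  have hM0 := extCb_nonneg n m R f
  have hMH := extCb_le_extHol n m τ R f
  have hAM : extCb n 0 R f ≤ extCb n m R f :=
    Real.iSup_le (fun i => Real.iSup_le (fun x => norm_iteratedFDeriv_le_extCb hf le_rfl
      (by omega) x.2) hM0) hM0
  obtain ⟨hsup, hhol⟩ := hbound R _ _ f hR hA0 (hAM.trans hMH) hf.1
    (fun x hx => by
      simpa using norm_iteratedFDeriv_le_extCb hf (Nat.zero_le m) le_rfl hx)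
    (fun x y hx hy => norm_iteratedFDeriv_sub_le_extHol hτ0 hf hx hy)
  have hH0 : 0 ≤ extHol n m τ R f := hM0.trans hMH
  set T := extCb n 0 R f ^ (1 - ((j : ℝ) + s) / (m + τ)) *
    extHol n m τ R f ^ (((j : ℝ) + s) / (m + τ)) with hT
  have hT0 : 0 ≤ T := by positivity
  have hCT : 0 ≤ C * T := by positivity
  have h1 : (⨆ x : {x : V n // R ≤ ‖x‖}, ‖pd n j d f x‖) ≤ C * T :=
    Real.iSup_le (fun x => (norm_apply_single_le d _).trans (hsup x x.2)) hCT
  have h2 : (⨆ p : {x : V n // R ≤ ‖x‖} × {x : V n // R ≤ ‖x‖},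
      ‖pd n j d f p.1 - pd n j d f p.2‖ / ‖(p.1 : V n) - (p.2 : V n)‖ ^ s) ≤ C * T := by
    refine Real.iSup_le (fun p => div_le_of_le_mul₀ (by positivity) hCT ?_) hCT
    refine le_trans ?_ (hhol p.1 p.2 p.1.2 p.2.2)
    exact norm_apply_single_le d (iteratedFDeriv ℝ j f p.1 - iteratedFDeriv ℝ j f p.2)
  have h3 : 0 ≤ 1 * extCb n 0 R f ^ (1 - (j : ℝ) / (m : ℝ)) *
      extCb n m R f ^ ((j : ℝ) / (m : ℝ)) := by positivity
  rw [mul_assoc (2 * C + 1), ← hT]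
  unfold extC0s
  linarith
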